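/- Let $k$ be a field, $A \in M_n(k)$, and suppose $f_1 \mid f_2 \mid \cdots \mid f_m$ are nonzero monic polynomials in $k[x]$ such that $V_A$ is isomorphic as a $k[x]$-module to $\bigoplus_{i=1}^m k[x]/f_i k[x]$. Then $\dim_k C_{M_n(k)}(A) = \sum_{i=1}^m \sum_{j=1}^m \min(\deg f_i, \deg f_j)$. -/

import Mathlib

open Polynomial Matrix

/-- The centralizer `C_{Mₙ(k)}(A) = {B : B * A = A * B}`, as a `k`-subspace of `Mₙ(k)`. -/
def matrixCentralizer {k : Type*} [Field k] {n : ℕ} (A : Matrix (Fin n) (Fin n) k) :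
    Submodule k (Matrix (Fin n) (Fin n) k) where
  carrier := {B : Matrix (Fin n) (Fin n) k | B * A = A * B}
  add_mem' hB hC := by simp only [Set.mem_setOf_eq] at *; rw [add_mul, mul_add, hB, hC]
  zero_mem' := by simp
  smul_mem' c B hB := by
    simp only [Set.mem_setOf_eq] at *
    rw [Matrix.smul_mul, Matrix.mul_smul, hB]

/-!
A `k[X]`-endomorphism of `V_A` is the same thing as a matrix commuting with `A`, so the centralizer
splits into the blocks `Hom(k[X]/(fᵢ), k[X]/(fⱼ))`. Such a block is the kernel of multiplication by
`fᵢ` on `k[X]/(fⱼ)`. By rank-nullity this kernel has the dimension of the cokernel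
`k[X]/(fᵢ, fⱼ)`, which is the degree of `gcd(fᵢ, fⱼ)`; along a divisibility chain that is the
smaller of the two degrees.
-/

section Hom

open scoped Pointwise

theorem finrank_linearMap_pi_pi {k R ι κ : Type*} [Semiring k] [StrongRankCondition k]
    [Semiring R] [Fintype ι] [Fintype κ] (M : ι → Type*) (N : κ → Type*)
    [∀ i, AddCommMonoid (M i)] [∀ i, Module R (M i)]
    [∀ j, AddCommMonoid (N j)] [∀ j, Module R (N j)] [∀ j, Module k (N j)]
    [∀ j, SMulCommClass R k (N j)] [∀ i j, Module.Free k (M i →ₗ[R] N j)]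
    [∀ i j, Module.Finite k (M i →ₗ[R] N j)] :
    Module.finrank k ((∀ i, M i) →ₗ[R] ∀ j, N j) =
      ∑ i, ∑ j, Module.finrank k (M i →ₗ[R] N j) := by
  classical
  let e : ((∀ i, M i) →ₗ[R] ∀ j, N j) ≃ₗ[k] ∀ i j, M i →ₗ[R] N j :=
    (LinearMap.lsum R M k).symm ≪≫ₗ
      LinearEquiv.piCongrRight fun _ ↦ (LinearEquiv.linearMapPi k).symm
  simp only [e.finrank_eq, Module.finrank_pi_fintype]

variable {R : Type*} [CommRing R]

/-- Evaluation at `1` identifies `Hom(R/(r), M)` with the `r`-torsion of `M`. -/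
def linearMapQuotientSpanEquivTorsionBy (r : R) (M : Type*) [AddCommGroup M] [Module R M] :
    ((R ⧸ Ideal.span {r}) →ₗ[R] M) ≃ₗ[R] Submodule.torsionBy R M r where
  toFun φ := ⟨φ 1, by
    rw [Submodule.mem_torsionBy_iff, ← map_smul, Algebra.smul_def, mul_one,
      Ideal.Quotient.algebraMap_eq, Ideal.Quotient.mk_singleton_self, map_zero]⟩
  map_add' _ _ := rfl
  map_smul' _ _ := rfl
  invFun x := Submodule.liftQSpanSingleton r (LinearMap.toSpanSingleton R M x) x.2
  left_inv φ := by
    refine Submodule.linearMap_qext _ (LinearMap.ext_ring ?_)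
    exact one_smul R (φ 1)
  right_inv x := Subtype.ext (one_smul R (x : M))

theorem finrank_torsionBy_eq_finrank_quotSMulTop (k : Type*) {M : Type*} [Field k] [Algebra k R]
    [AddCommGroup M] [Module R M] [Module k M] [IsScalarTower k R M] [Module.Finite k M] (r : R) :
    Module.finrank k (Submodule.torsionBy R M r) = Module.finrank k (QuotSMulTop r M) := by
  let μ : M →ₗ[k] M := (LinearMap.lsmul R M r).restrictScalars k
  have hrange : LinearMap.range μ = (r • (⊤ : Submodule R M)).restrictScalars k := by
    ext x
    simp [μ, Submodule.mem_smul_pointwise_iff_exists]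
  have hker : Module.finrank k (LinearMap.ker μ) + Module.finrank k (LinearMap.range μ) =
      Module.finrank k M := by
    rw [add_comm, LinearMap.finrank_range_add_finrank_ker]
  have hcoker := (LinearMap.range μ).finrank_quotient_add_finrank
  rw [hrange] at hker hcoker
  exact Nat.add_right_cancel (hker.trans hcoker.symm)

/-- The cokernel of multiplication by `r` on `R/(s)` is `R/(r, s)`. -/
noncomputable def quotSMulTopQuotientSpanEquiv (r s : R) :
    QuotSMulTop r (R ⧸ Ideal.span {s}) ≃ₗ[R] R ⧸ Ideal.span {r, s} :=
  Submodule.quotEquivOfEq _ _ (by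
      rw [Ideal.span_insert, Submodule.map_sup, Submodule.mkQ_map_self, sup_bot_eq,
        ← Submodule.ideal_span_singleton_smul, ← Submodule.range_mkQ, ← Submodule.map_top,
        ← Submodule.map_smul'', smul_eq_mul, Ideal.mul_top]) ≪≫ₗ
    Submodule.quotientQuotientEquivQuotient (Ideal.span {s}) (Ideal.span {r, s})
      (Ideal.span_mono (Set.subset_insert r {s}))

end Hom

section Polynomial

variable {k : Type*} [Field k]

theorem finite_quotient_span_singleton {g : k[X]} (hg : g ≠ 0) :
    Module.Finite k (k[X] ⧸ Ideal.span {g}) :=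
  (AdjoinRoot.powerBasis hg).finite

theorem finrank_linearMap_quotient_span [DecidableEq k] (f : k[X]) {g : k[X]} (hg : g ≠ 0) :
    Module.finrank k ((k[X] ⧸ Ideal.span {f}) →ₗ[k[X]] (k[X] ⧸ Ideal.span {g})) =
      (EuclideanDomain.gcd f g).natDegree := by
  have := finite_quotient_span_singleton hg
  rw [((linearMapQuotientSpanEquivTorsionBy f _).restrictScalars k).finrank_eq,
    finrank_torsionBy_eq_finrank_quotSMulTop,
    ((quotSMulTopQuotientSpanEquiv f g).restrictScalars k).finrank_eq,
    ← EuclideanDomain.span_gcd, finrank_quotient_span_eq_natDegree]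

theorem natDegree_gcd_eq_min_of_dvd_or_dvd [DecidableEq k] {f g : k[X]} (hf : f ≠ 0) (hg : g ≠ 0)
    (h : f ∣ g ∨ g ∣ f) :
    (EuclideanDomain.gcd f g).natDegree = min f.natDegree g.natDegree := by
  rcases h with h | h
  · have : Associated (EuclideanDomain.gcd f g) f :=
      associated_of_dvd_dvd (EuclideanDomain.gcd_dvd_left f g) (EuclideanDomain.dvd_gcd dvd_rfl h)
    rw [natDegree_eq_of_degree_eq (degree_eq_degree_of_associated this),
      min_eq_left (natDegree_le_of_dvd h hg)]
  · have : Associated (EuclideanDomain.gcd f g) g :=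
      associated_of_dvd_dvd (EuclideanDomain.gcd_dvd_right f g) (EuclideanDomain.dvd_gcd h dvd_rfl)
    rw [natDegree_eq_of_degree_eq (degree_eq_degree_of_associated this),
      min_eq_right (natDegree_le_of_dvd h hf)]

end Polynomial

section Centralizer

open Module in
/-- The `R[X]`-endomorphisms of the module on which `X` acts as `φ` are the endomorphisms
commuting with `φ`. -/
noncomputable def endAEvalEquivCentralizer {R M : Type*} [CommSemiring R] [AddCommMonoid M]
    [Module R M] (φ : End R M) :
    End R[X] (AEval' φ) ≃ₐ[R] Subalgebra.centralizer R {φ} where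
  toFun ψ := ⟨(AEval'.of φ).symm.conj (ψ.restrictScalars R), by
    simp only [Subalgebra.mem_centralizer_iff, Set.mem_singleton_iff, forall_eq]
    ext v
    have hcomm : φ ((AEval'.of φ).symm (ψ (AEval'.of φ v))) =
        (AEval'.of φ).symm (ψ (AEval'.of φ (φ v))) := by
      rw [← AEval'.X_smul_of, map_smul, AEval'.of_symm_X_smul]
    exact hcomm⟩
  invFun ψ := LinearMap.ofAEval φ (AEval'.of φ ∘ₗ ψ.1) fun v ↦ by
    have hcomm : φ (ψ.1 v) = ψ.1 (φ v) := LinearMap.congr_fun (ψ.2 φ rfl) v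
    exact (congrArg (AEval'.of φ) hcomm.symm).trans (AEval'.X_smul_of φ (ψ.1 v)).symm
  left_inv _ := rfl
  right_inv _ := rfl
  map_mul' _ _ := rfl
  map_add' _ _ := rfl
  commutes' _ := rfl

theorem finrank_matrixCentralizer {k : Type*} [Field k] {n : ℕ} (A : Matrix (Fin n) (Fin n) k) :
    Module.finrank k (matrixCentralizer A) =
      Module.finrank k (Subalgebra.centralizer k {Matrix.toLin' A}) := by
  have hmap : (matrixCentralizer A).map (Matrix.toLin' : _ ≃ₗ[k] _).toLinearMap =
      Subalgebra.toSubmodule (Subalgebra.centralizer k {Matrix.toLin' A}) := by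
    ext φ
    obtain ⟨B, rfl⟩ := Matrix.toLin'.surjective φ
    rw [Submodule.mem_map_equiv, LinearEquiv.symm_apply_apply, Subalgebra.mem_toSubmodule,
      Subalgebra.mem_centralizer_iff]
    simp only [Set.mem_singleton_iff, forall_eq, Module.End.mul_eq_comp, ← Matrix.toLin'_mul,
      EmbeddingLike.apply_eq_iff_eq]
    exact eq_comm
  rw [← Subalgebra.finrank_toSubmodule, ← hmap, LinearEquiv.finrank_map_eq]

end Centralizer

theorem finrank_centralizer_eq_sum_min_deg_general {k V ι : Type*} [Field k] [DecidableEq k]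
    [AddCommGroup V] [Module k V] [Fintype ι] (φ : Module.End k V) (f : ι → k[X])
    (hne : ∀ i, f i ≠ 0)
    (e : Module.AEval' φ ≃ₗ[k[X]] ∀ i, k[X] ⧸ Ideal.span {f i}) :
    Module.finrank k (Subalgebra.centralizer k {φ}) =
      ∑ i, ∑ j, (EuclideanDomain.gcd (f i) (f j)).natDegree := by
  have (i : ι) := finite_quotient_span_singleton (hne i)
  have (i j : ι) : Module.Finite k ((k[X] ⧸ Ideal.span {f i}) →ₗ[k[X]] k[X] ⧸ Ideal.span {f j}) :=
    .of_injective (LinearMap.restrictScalarsₗ k k[X] _ _ k) (LinearMap.restrictScalars_injective k)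
  have (i j : ι) : Module.Free k ((k[X] ⧸ Ideal.span {f i}) →ₗ[k[X]] k[X] ⧸ Ideal.span {f j}) :=
    .of_divisionRing k _
  rw [← (endAEvalEquivCentralizer φ).toLinearEquiv.finrank_eq,
    (e.conj.restrictScalars k).finrank_eq, finrank_linearMap_pi_pi]
  simp only [finrank_linearMap_quotient_span _ (hne _)]

/-- If `f 0 ∣ f 1 ∣ ⋯ ∣ f (m-1)` are nonzero monic polynomials with
`V_A ≅ ⨁ᵢ k[x]/fᵢ k[x]`, then
`dim_k C_{Mₙ(k)}(A) = ∑ᵢ ∑ⱼ min (deg fᵢ) (deg fⱼ)`. -/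
theorem finrank_centralizer_eq_sum_min_deg {k : Type*} [Field k] {n m : ℕ}
    (A : Matrix (Fin n) (Fin n) k) (f : Fin m → k[X])
    (hmonic : ∀ i, (f i).Monic) (hne : ∀ i, f i ≠ 0)
    (hdvd : ∀ i j : Fin m, i ≤ j → f i ∣ f j)
    (hiso : Nonempty (Module.AEval' (Matrix.toLin' A) ≃ₗ[k[X]]
      (∀ i : Fin m, k[X] ⧸ Ideal.span {f i}))) :
    Module.finrank k (matrixCentralizer A) =
      ∑ i : Fin m, ∑ j : Fin m, min (f i).natDegree (f j).natDegree := by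
  classical
  obtain ⟨e⟩ := hiso
  rw [finrank_matrixCentralizer, finrank_centralizer_eq_sum_min_deg_general _ f hne e]
  simp only [natDegree_gcd_eq_min_of_dvd_or_dvd (hne _) (hne _)
    ((le_total _ _).imp (hdvd _ _) (hdvd _ _))]
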